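/- If in addition, for each relay i there is a random variable Z_i^Y such that H(Y_i | {W_k}_{k∈U_i}, Z_i^Y) = 0 and (Z_1^Y,…,Z_K^Y) is independent of (W_1,…,W_K), then under server security: H(Z_1^Y,…,Z_K^Y) ≥ H(Y_1,…,Y_K) − L. -/

import Mathlib

/-!
Write `S = ∑ W_k` and `q = |𝔽_q|`. Since `S` is a function of `W`, server security reads
`H(Y, W) + H(S) = H(Y, S) + H(W)`. On the support of `p`, the pair `(Z^Y, W)` determines every
`Y_i`, so, by independence,
`H(Y, W) ≤ H(Z^Y, W) = H(Z^Y) + H(W)`.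
Combining the two, `H(Z^Y) ≥ H(Y, S) - H(S) ≥ H(Y) - L`, because `S` takes at most `q ^ L` values.

All entropy comparisons go through the formula `H(X) = ∑ ω, p ω * (-log_q P(X = X ω))`
(`ent_eq_sum`): if `X` determines `Y` on the support of `p`, then `{X = X ω} ⊆ {Y = Y ω}` up to a
null set, and the summands compare termwise (`ent_le_of_determines`). Conversely,
`H(X | Y) = 0` forces equality in each term, hence `Y` determines `X` on the support
(`determines_of_condEnt_eq_zero`).
-/

open scoped BigOperators

noncomputable def pr {Ω : Type} [Fintype Ω] {α : Type} [DecidableEq α]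
    (p : Ω → ℝ) (X : Ω → α) (a : α) : ℝ :=
  ∑ ω, if X ω = a then p ω else 0

noncomputable def ent {Ω : Type} [Fintype Ω] {α : Type} [Fintype α] [DecidableEq α]
    (q : ℕ) (p : Ω → ℝ) (X : Ω → α) : ℝ :=
  -∑ a, pr p X a * Real.logb q (pr p X a)

noncomputable def condEnt {Ω : Type} [Fintype Ω] {α β : Type}
    [Fintype α] [DecidableEq α] [Fintype β] [DecidableEq β]
    (q : ℕ) (p : Ω → ℝ) (X : Ω → α) (Y : Ω → β) : ℝ :=
  ent q p (fun ω => (X ω, Y ω)) - ent q p Y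

noncomputable def mutInfo {Ω : Type} [Fintype Ω] {α β : Type}
    [Fintype α] [DecidableEq α] [Fintype β] [DecidableEq β]
    (q : ℕ) (p : Ω → ℝ) (X : Ω → α) (Y : Ω → β) : ℝ :=
  ent q p X + ent q p Y - ent q p (fun ω => (X ω, Y ω))

noncomputable def condMutInfo {Ω : Type} [Fintype Ω] {α β γ : Type}
    [Fintype α] [DecidableEq α] [Fintype β] [DecidableEq β] [Fintype γ] [DecidableEq γ]
    (q : ℕ) (p : Ω → ℝ) (X : Ω → α) (Y : Ω → β) (Z : Ω → γ) : ℝ :=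
  condEnt q p X Z + condEnt q p Y Z - condEnt q p (fun ω => (X ω, Y ω)) Z

def IsPMF {Ω : Type} [Fintype Ω] (p : Ω → ℝ) : Prop :=
  (∀ ω, 0 ≤ p ω) ∧ ∑ ω, p ω = 1

def IndepRV {Ω : Type} [Fintype Ω] {α β : Type} [DecidableEq α] [DecidableEq β]
    (p : Ω → ℝ) (X : Ω → α) (Y : Ω → β) : Prop :=
  ∀ a b, pr p (fun ω => (X ω, Y ω)) (a, b) = pr p X a * pr p Y b

/-- The set of `B` relays `{k, k+1, …, k+B−1}` (indices mod `K`) associated with user `k`. -/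
def Bset (K B : ℕ) (k : Fin K) : Finset (Fin K) :=
  (Finset.range B).image fun j => ⟨((k : ℕ) + j) % K, Nat.mod_lt _ k.pos⟩

/-- The set of users associated with relay `i`. -/
def Uset (K B : ℕ) (i : Fin K) : Finset (Fin K) :=
  Finset.univ.filter fun k => i ∈ Bset K B k

/-- `X` determines `Y` almost surely: outcomes of nonzero mass with equal `X`-values have equal
`Y`-values. -/
def Determines {Ω α β : Type} (p : Ω → ℝ) (X : Ω → α) (Y : Ω → β) : Prop :=
  ∀ ω ω', p ω ≠ 0 → p ω' ≠ 0 → X ω = X ω' → Y ω = Y ω'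

section Entropy

variable {Ω : Type} [Fintype Ω] {α β : Type} [DecidableEq α] [DecidableEq β] {p : Ω → ℝ} {q : ℕ}

theorem pr_nonneg_of_isPMF (hp : IsPMF p) (X : Ω → α) (a : α) : 0 ≤ pr p X a :=
  Finset.sum_nonneg fun ω _ => by
    split_ifs
    · exact hp.1 ω
    · exact le_rfl

theorem le_pr_self (hp : IsPMF p) (X : Ω → α) (ω : Ω) : p ω ≤ pr p X (X ω) := by
  have h := Finset.single_le_sum (f := fun ω' => if X ω' = X ω then p ω' else 0)
    (fun ω' _ => by
      split_ifs
      · exact hp.1 ω'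
      · exact le_rfl) (Finset.mem_univ ω)
  simpa [pr] using h

theorem pr_self_pos (hp : IsPMF p) (X : Ω → α) {ω : Ω} (hω : p ω ≠ 0) :
    0 < pr p X (X ω) :=
  lt_of_lt_of_le (lt_of_le_of_ne (hp.1 ω) hω.symm) (le_pr_self hp X ω)

theorem pr_le_of_determines (hp : IsPMF p) {X : Ω → α} {Y : Ω → β}
    (h : Determines p X Y) {ω : Ω} (hω : p ω ≠ 0) : pr p X (X ω) ≤ pr p Y (Y ω) := by
  refine Finset.sum_le_sum fun ω' _ => ?_
  by_cases h0 : p ω' = 0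
  · simp [h0]
  · by_cases hX : X ω' = X ω
    · simp [hX, h ω' ω h0 hω hX]
    · rw [if_neg hX]
      split_ifs
      · exact hp.1 ω'
      · exact le_rfl

variable [Fintype α] [Fintype β]

theorem sum_pr_mul (X : Ω → α) (g : α → ℝ) :
    ∑ a, pr p X a * g a = ∑ ω, p ω * g (X ω) := by
  simp only [pr, Finset.sum_mul]
  rw [Finset.sum_comm]
  refine Finset.sum_congr rfl fun ω _ => ?_
  simp [ite_mul]

/-- Entropy is the expected surprisal. -/
theorem ent_eq_sum (X : Ω → α) :
    ent q p X = -∑ ω, p ω * Real.logb q (pr p X (X ω)) := by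
  rw [ent, sum_pr_mul X fun a => Real.logb q (pr p X a)]

theorem ent_le_of_determines (hq : 1 < q) (hp : IsPMF p) {X : Ω → α} {Y : Ω → β}
    (h : Determines p X Y) : ent q p Y ≤ ent q p X := by
  rw [ent_eq_sum, ent_eq_sum, neg_le_neg_iff]
  refine Finset.sum_le_sum fun ω _ => ?_
  by_cases hω : p ω = 0
  · simp [hω]
  · exact mul_le_mul_of_nonneg_left
      (Real.logb_le_logb_of_le (by exact_mod_cast hq) (pr_self_pos hp X hω)
        (pr_le_of_determines hp h hω)) (hp.1 ω)

/-- Vanishing conditional entropy `H(X | Y) = 0` means that `Y` determines `X` almost surely. -/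
theorem determines_of_condEnt_eq_zero (hq : 1 < q) (hp : IsPMF p) {X : Ω → α} {Y : Ω → β}
    (h : condEnt q p X Y = 0) : Determines p Y X := by
  have hq' : (1 : ℝ) < q := by exact_mod_cast hq
  have hdet : Determines p (fun ω => (X ω, Y ω)) Y := fun ω ω' _ _ e => (Prod.mk.inj e).2
  have hle : ∀ ω ∈ Finset.univ,
      p ω * Real.logb q (pr p (fun ω => (X ω, Y ω)) (X ω, Y ω))
        ≤ p ω * Real.logb q (pr p Y (Y ω)) := fun ω _ => by
    by_cases hω : p ω = 0
    · simp [hω]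
    · exact mul_le_mul_of_nonneg_left
        (Real.logb_le_logb_of_le hq' (pr_self_pos hp (fun ω => (X ω, Y ω)) hω)
          (pr_le_of_determines hp hdet hω)) (hp.1 ω)
  have hsum : ∑ ω, p ω * Real.logb q (pr p (fun ω => (X ω, Y ω)) (X ω, Y ω))
      = ∑ ω, p ω * Real.logb q (pr p Y (Y ω)) := by
    rw [condEnt, ent_eq_sum, ent_eq_sum] at h
    linarith
  have hterm := (Finset.sum_eq_sum_iff_of_le hle).1 hsum
  intro ω ω' hω hω' hY
  by_contra hX
  have hlog := mul_left_cancel₀ hω (hterm ω (Finset.mem_univ ω))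
  have hpr := Real.logb_injOn_pos hq' (pr_self_pos hp (fun ω => (X ω, Y ω)) hω)
    (pr_self_pos hp Y hω) hlog
  -- The outcome `ω'` contributes to `P(Y = Y ω)` but not to `P(X = X ω, Y = Y ω)`.
  have hlt : pr p (fun ω => (X ω, Y ω)) (X ω, Y ω) < pr p Y (Y ω) := by
    refine Finset.sum_lt_sum (fun ω'' _ => ?_) ⟨ω', Finset.mem_univ _, ?_⟩
    · by_cases hY' : Y ω'' = Y ω
      · rw [if_pos hY']
        split_ifs
        · exact le_rfl
        · exact hp.1 ω''
      · simp [hY']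
    · have : X ω' ≠ X ω := fun e => hX e.symm
      simpa [this, hY] using lt_of_le_of_ne (hp.1 ω') hω'.symm
  exact hlt.ne hpr

theorem ent_pair_of_indep (hp : IsPMF p) {X : Ω → α} {Y : Ω → β} (h : IndepRV p X Y) :
    ent q p (fun ω => (X ω, Y ω)) = ent q p X + ent q p Y := by
  rw [ent_eq_sum, ent_eq_sum, ent_eq_sum, ← neg_add, ← Finset.sum_add_distrib]
  congr 1
  refine Finset.sum_congr rfl fun ω _ => ?_
  by_cases hω : p ω = 0
  · simp [hω]
  · rw [h, Real.logb_mul (pr_self_pos hp X hω).ne' (pr_self_pos hp Y hω).ne', mul_add]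

theorem sum_pr (hp : IsPMF p) (X : Ω → α) : ∑ a, pr p X a = 1 := by
  have h := sum_pr_mul (p := p) X fun _ => 1
  simpa [hp.2] using h

/-- The uniform bound on entropy, from nonnegativity of the divergence to the uniform law. -/
theorem ent_le_logb_card [Nonempty α] (hq : 1 < q) (hp : IsPMF p) (X : Ω → α) :
    ent q p X ≤ Real.logb q (Fintype.card α) := by
  have hn : (0 : ℝ) < Fintype.card α := by exact_mod_cast Fintype.card_pos
  have hlq : 0 < Real.log q := Real.log_pos (by exact_mod_cast hq)
  -- `log x ≤ x - 1` at `x = 1 / (n P(X = a))`, multiplied by `P(X = a)`.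
  have hterm : ∀ a, -(pr p X a * Real.log (pr p X a))
      ≤ pr p X a * Real.log (Fintype.card α) + ((Fintype.card α : ℝ)⁻¹ - pr p X a) := by
    intro a
    rcases (pr_nonneg_of_isPMF hp X a).eq_or_lt with h0 | h0
    · simp [← h0]
    · have hl := Real.log_le_sub_one_of_pos (inv_pos.2 (mul_pos hn h0))
      rw [Real.log_inv, Real.log_mul hn.ne' h0.ne'] at hl
      have hm := mul_le_mul_of_nonneg_left hl h0.le
      have he : pr p X a * (((Fintype.card α : ℝ) * pr p X a)⁻¹ - 1)
          = (Fintype.card α : ℝ)⁻¹ - pr p X a := by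
        field_simp
      rw [he] at hm
      linarith
  have hs := Finset.sum_le_sum fun a (_ : a ∈ Finset.univ) => hterm a
  rw [Finset.sum_add_distrib, ← Finset.sum_mul, Finset.sum_sub_distrib, sum_pr hp,
    Finset.sum_const, Finset.card_univ, nsmul_eq_mul, mul_inv_cancel₀ hn.ne',
    Finset.sum_neg_distrib] at hs
  have he : ent q p X = (-∑ a, pr p X a * Real.log (pr p X a)) / Real.log q := by
    simp only [ent, Real.logb, neg_div, Finset.sum_div, mul_div_assoc]
  rw [he, Real.logb]
  gcongr
  linarith

end Entropy

/-- paper's Lemma 5: under server security, if each `Y_i` is a function of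
`{W_k}_{k∈U_i}` and `Z_i^Y`, and `(Z_1^Y,…,Z_K^Y)` is independent of `(W_1,…,W_K)`, then
`H(Z_1^Y,…,Z_K^Y) ≥ H(Y_1,…,Y_K) − L`. -/
theorem hsa_ZY_entropy_lower_bound
    {K B L : ℕ} (hK : 2 ≤ K) (hB1 : 1 ≤ B) (hBK : B ≤ K) (hL : 1 ≤ L)
    {F : Type} [Field F] [Fintype F] [DecidableEq F]
    {Ω : Type} [Fintype Ω] (p : Ω → ℝ) (hp : IsPMF p)
    {ζ χ υ : Type} [Fintype ζ] [DecidableEq ζ] [Fintype χ] [DecidableEq χ]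
    [Fintype υ] [DecidableEq υ]
    (W : Fin K → Ω → (Fin L → F)) (Z : Fin K → Ω → ζ)
    (Xm : Fin K → Fin K → Ω → χ) (Y : Fin K → Ω → υ)
    -- the inputs are i.i.d. uniform on 𝔽_q^L
    (hW : ∀ w : Fin K → Fin L → F,
      pr p (fun ω => fun k => W k ω) w = 1 / (Fintype.card F : ℝ) ^ (K * L))
    -- the inputs are independent of the keys
    (hWZ : IndepRV p (fun ω => fun k => W k ω) (fun ω => fun k => Z k ω))
    -- user messages are functions of the user's input and key
    (hX : ∀ k : Fin K,
      condEnt (Fintype.card F) p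
        (fun ω => fun i : {i // i ∈ Bset K B k} => Xm k i.1 ω)
        (fun ω => (W k ω, Z k ω)) = 0)
    -- relay messages are functions of the received messages
    (hY : ∀ i : Fin K,
      condEnt (Fintype.card F) p (Y i)
        (fun ω => fun k : {k // k ∈ Uset K B i} => Xm k.1 i ω) = 0)
    -- the server recovers the sum of the inputs
    (hRec : condEnt (Fintype.card F) p
      (fun ω => ∑ k, W k ω) (fun ω => fun i => Y i ω) = 0)
    {ξ : Type} [Fintype ξ] [DecidableEq ξ]
    (ZY : Fin K → Ω → ξ)
    -- Y_i is a function of {W_k}_{k ∈ U_i} and Z_i^Y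
    (hZYdef : ∀ i : Fin K,
      condEnt (Fintype.card F) p (Y i)
        (fun ω => ((fun k : {k // k ∈ Uset K B i} => W k.1 ω), ZY i ω)) = 0)
    -- (Z_1^Y, …, Z_K^Y) is independent of (W_1, …, W_K)
    (hZYindep : IndepRV p (fun ω => fun i => ZY i ω) (fun ω => fun k => W k ω))
    -- server security
    (hServerSec : condMutInfo (Fintype.card F) p
      (fun ω => fun i => Y i ω) (fun ω => fun k => W k ω) (fun ω => ∑ k, W k ω) = 0) :
    ent (Fintype.card F) p (fun ω => fun i => ZY i ω)
      ≥ ent (Fintype.card F) p (fun ω => fun i => Y i ω) - L := by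
  have hq : 1 < Fintype.card F := Fintype.one_lt_card
  set q := Fintype.card F with hqdef
  have hYdet : Determines p (fun ω => ((fun i => ZY i ω), (fun k => W k ω)))
      (fun ω => ((fun i => Y i ω), (fun k => W k ω))) := by
    intro ω ω' hω hω' h
    obtain ⟨hZ, hw⟩ := Prod.mk.inj h
    refine Prod.ext (funext fun i => ?_) hw
    refine determines_of_condEnt_eq_zero hq hp (hZYdef i) ω ω' hω hω' ?_
    exact Prod.ext (funext fun k => congrFun hw k.1) (congrFun hZ i)
  have h1 := ent_le_of_determines hq hp hYdet
  rw [ent_pair_of_indep hp hZYindep] at h1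
  have h3 : ent q p (fun ω => fun k => W k ω)
      ≤ ent q p (fun ω => ((fun k => W k ω), ∑ k, W k ω)) :=
    ent_le_of_determines hq hp fun ω ω' _ _ h => (Prod.mk.inj h).1
  -- `S` is a function of `W`, so adjoining it to `(Y, W)` adds no entropy.
  have h4 : ent q p (fun ω => (((fun i => Y i ω), (fun k => W k ω)), ∑ k, W k ω))
      ≤ ent q p (fun ω => ((fun i => Y i ω), (fun k => W k ω))) := by
    refine ent_le_of_determines hq hp fun ω ω' _ _ h => Prod.ext h ?_
    exact congrArg (fun w : Fin K → Fin L → F => ∑ k, w k) (Prod.mk.inj h).2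
  have h5 : ent q p (fun ω => fun i => Y i ω)
      ≤ ent q p (fun ω => ((fun i => Y i ω), ∑ k, W k ω)) :=
    ent_le_of_determines hq hp fun ω ω' _ _ h => (Prod.mk.inj h).1
  have h6 : ent q p (fun ω => ∑ k, W k ω) ≤ L := by
    refine (ent_le_logb_card hq hp _).trans (le_of_eq ?_)
    have hq' : (1 : ℝ) < q := by exact_mod_cast hq
    rw [Fintype.card_fun, Fintype.card_fin, ← hqdef, Nat.cast_pow, Real.logb_pow,
      Real.logb_self_eq_one hq', mul_one]
  simp only [condMutInfo, condEnt] at hServerSec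
  linarith
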